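/- Let n ≥ 2, let p > 0 be a real number, and let f be a continuous nonnegative function on the unit sphere S^{n-1} ⊆ ℝ^n that is not identically zero. Then there exists a constant C > 0, depending only on n, p and f, such that for every nonempty compact convex origin-symmetric set K ⊆ ℝ^n with support function h_K, one has ∫_{S^{n-1}} h_K(x)^p f(x) dσ(x) ≥ C · (sup_{x ∈ S^{n-1}} h_K(x))^p. -/

import Mathlib

open MeasureTheory
open scoped RealInnerProductSpace

/-- The support function of a set `K ⊆ ℝⁿ`: `h_K(x) = sup_{y ∈ K} ⟨y, x⟩`. -/
noncomputable def supportFunction {n : ℕ} (K : Set (EuclideanSpace ℝ (Fin n)))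
    (x : EuclideanSpace ℝ (Fin n)) : ℝ :=
  sSup ((fun y => ⟪y, x⟫) '' K)

lemma exists_aux {n : ℕ} (f : Metric.sphere (0 : EuclideanSpace ℝ (Fin n)) 1 → ℝ)
    (hf : Continuous f) (hfne : ∃ x, f x ≠ 0)
    (u : Metric.sphere (0 : EuclideanSpace ℝ (Fin n)) 1) :
    ∃ x, f x ≠ 0 ∧ ⟪(u : EuclideanSpace ℝ (Fin n)), (x : EuclideanSpace ℝ (Fin n))⟫ ≠ 0 := by
  obtain ⟨x0, hx0⟩ := hfne
  by_cases h : ⟪(u : EuclideanSpace ℝ (Fin n)), (x0 : EuclideanSpace ℝ (Fin n))⟫ = 0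
  swap
  · exact ⟨x0, hx0, h⟩
  have hu : ‖(u : EuclideanSpace ℝ (Fin n))‖ = 1 := by simp
  have hx : ‖(x0 : EuclideanSpace ℝ (Fin n))‖ = 1 := by simp
  have hmem : ∀ t : ℝ, Real.cos t • (x0 : EuclideanSpace ℝ (Fin n)) +
      Real.sin t • (u : EuclideanSpace ℝ (Fin n)) ∈
        Metric.sphere (0 : EuclideanSpace ℝ (Fin n)) 1 := by
    intro t
    rw [mem_sphere_zero_iff_norm]
    have h2 : ‖Real.cos t • (x0 : EuclideanSpace ℝ (Fin n)) +
      Real.sin t • (u : EuclideanSpace ℝ (Fin n))‖ ^ 2 = 1 := by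
      rw [norm_add_sq_real, norm_smul, norm_smul, hu, hx, inner_smul_left, inner_smul_right,
        real_inner_comm, h]
      simp [Real.cos_sq_add_sin_sq]
    have h3 := norm_nonneg (Real.cos t • (x0 : EuclideanSpace ℝ (Fin n)) +
      Real.sin t • (u : EuclideanSpace ℝ (Fin n)))
    nlinarith
  let γ : ℝ → Metric.sphere (0 : EuclideanSpace ℝ (Fin n)) 1 := fun t => ⟨_, hmem t⟩
  have hγ : Continuous γ := by
    apply Continuous.subtype_mk
    fun_prop
  have hγ0 : γ 0 = x0 := by
    apply Subtype.ext
    simp [γ]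
  have hev : ∀ᶠ t in nhds (0 : ℝ), f (γ t) ≠ 0 := by
    have : ContinuousAt (fun t => f (γ t)) 0 := (hf.comp hγ).continuousAt
    exact this.eventually_ne (by simpa [hγ0] using hx0)
  have hev2 : ∀ᶠ t in nhdsWithin (0 : ℝ) (Set.Ioi 0), t ∈ Set.Ioo 0 Real.pi :=
    Ioo_mem_nhdsGT Real.pi_pos
  obtain ⟨t, ht1, ht2⟩ := ((hev.filter_mono nhdsWithin_le_nhds).and hev2).exists
  refine ⟨γ t, ht1, ?_⟩
  have hs := Real.sin_pos_of_mem_Ioo ht2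
  simp only [γ, inner_add_right, inner_smul_right, h, real_inner_self_eq_norm_sq, hu]
  simpa using hs.ne'

lemma continuous_supportFunction {n : ℕ} {K : Set (EuclideanSpace ℝ (Fin n))}
    (hK : IsCompact K) : Continuous (supportFunction K) := by
  unfold supportFunction
  apply hK.continuous_sSup (f := fun x y : EuclideanSpace ℝ (Fin n) => ⟪y, x⟫)
  change Continuous fun q : EuclideanSpace ℝ (Fin n) × EuclideanSpace ℝ (Fin n) => ⟪q.2, q.1⟫
  fun_prop

lemma integrable_aux {n : ℕ} {g : Metric.sphere (0 : EuclideanSpace ℝ (Fin n)) 1 → ℝ}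
    (hg : Continuous g) :
    Integrable g (volume : Measure (EuclideanSpace ℝ (Fin n))).toSphere :=
  hg.integrable_of_hasCompactSupport (HasCompactSupport.of_compactSpace g)

/-- For `n ≥ 2`, `p > 0` and a continuous nonnegative function `f` on the
unit sphere that is not identically zero, there is `C > 0` (depending only on `n`, `p`, `f`)
such that for every nonempty compact convex origin-symmetric `K ⊆ ℝⁿ`,
`∫_{S^{n-1}} h_K(x)^p f(x) dσ(x) ≥ C (sup_{S^{n-1}} h_K)^p`. -/
theorem integral_supportFunction_rpow_ge (n : ℕ) (hn : 2 ≤ n) (p : ℝ) (hp : 0 < p)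
    (f : Metric.sphere (0 : EuclideanSpace ℝ (Fin n)) 1 → ℝ)
    (hf : Continuous f) (hf0 : ∀ x, 0 ≤ f x) (hfne : ∃ x, f x ≠ 0) :
    ∃ C > (0 : ℝ), ∀ K : Set (EuclideanSpace ℝ (Fin n)),
      K.Nonempty → IsCompact K → Convex ℝ K → K = -K →
      (∫ x : Metric.sphere (0 : EuclideanSpace ℝ (Fin n)) 1,
          supportFunction K (x : EuclideanSpace ℝ (Fin n)) ^ p * f x
          ∂((volume : Measure (EuclideanSpace ℝ (Fin n))).toSphere)) ≥
        C * (⨆ x : Metric.sphere (0 : EuclideanSpace ℝ (Fin n)) 1,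
              supportFunction K (x : EuclideanSpace ℝ (Fin n))) ^ p := by
  have hcont : ∀ u : EuclideanSpace ℝ (Fin n),
      Continuous fun x : Metric.sphere (0 : EuclideanSpace ℝ (Fin n)) 1 =>
        |⟪u, (x : EuclideanSpace ℝ (Fin n))⟫| ^ p * f x := by
    intro u
    refine Continuous.mul (Continuous.rpow_const (by fun_prop) fun _ => Or.inr hp.le) hf
  let g : Metric.sphere (0 : EuclideanSpace ℝ (Fin n)) 1 → ℝ := fun u =>
    ∫ x : Metric.sphere (0 : EuclideanSpace ℝ (Fin n)) 1,
      |⟪(u : EuclideanSpace ℝ (Fin n)), (x : EuclideanSpace ℝ (Fin n))⟫| ^ p * f x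
      ∂((volume : Measure (EuclideanSpace ℝ (Fin n))).toSphere)
  have hg : Continuous g := by
    refine continuous_of_dominated (bound := f)
      (fun u => (hcont u).aestronglyMeasurable) (fun u => ?_) (integrable_aux hf) ?_
    · refine Filter.Eventually.of_forall fun x => ?_
      have h1 : |⟪(u : EuclideanSpace ℝ (Fin n)), (x : EuclideanSpace ℝ (Fin n))⟫| ≤ 1 := by
        simpa using abs_real_inner_le_norm (u : EuclideanSpace ℝ (Fin n))
          (x : EuclideanSpace ℝ (Fin n))
      have h2 := Real.rpow_le_one (abs_nonneg _) h1 hp.le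
      rw [Real.norm_of_nonneg (mul_nonneg (Real.rpow_nonneg (abs_nonneg _) _) (hf0 x))]
      exact mul_le_of_le_one_left (hf0 x) h2
    · refine Filter.Eventually.of_forall fun x => ?_
      exact (Continuous.rpow_const (by fun_prop) fun _ => Or.inr hp.le).mul continuous_const
  have hgpos : ∀ u, 0 < g u := by
    intro u
    obtain ⟨x, hx, hux⟩ := exists_aux f hf hfne u
    refine (hcont u).integral_pos_of_hasCompactSupport_nonneg_nonzero
      (HasCompactSupport.of_compactSpace _)
      (fun x => mul_nonneg (Real.rpow_nonneg (abs_nonneg _) _) (hf0 x)) (x := x) ?_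
    exact mul_ne_zero (Real.rpow_pos_of_pos (abs_pos.2 hux) _).ne' hx
  obtain ⟨x0, hx0⟩ := hfne
  haveI : Nonempty (Metric.sphere (0 : EuclideanSpace ℝ (Fin n)) 1) := ⟨x0⟩
  obtain ⟨u0, -, hu0⟩ := isCompact_univ.exists_isMinOn Set.univ_nonempty hg.continuousOn
  refine ⟨g u0, hgpos u0, fun K hne hK _ hsym => ?_⟩
  obtain ⟨y, hyK, hy⟩ := hK.exists_isMaxOn hne continuous_norm.continuousOn
  have hbdd : ∀ x : EuclideanSpace ℝ (Fin n), BddAbove ((fun y => ⟪y, x⟫) '' K) := fun x =>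
    (hK.image (by fun_prop)).bddAbove
  have hlow : ∀ z ∈ K, ∀ x, |⟪z, x⟫| ≤ supportFunction K x := by
    intro z hz x
    have hz' : -z ∈ K := by rw [hsym]; simpa using hz
    refine abs_le'.2 ⟨le_csSup (hbdd x) ⟨z, hz, rfl⟩, le_csSup (hbdd x) ⟨-z, hz', ?_⟩⟩
    simp
  have hnn : ∀ x, 0 ≤ supportFunction K x := fun x => (abs_nonneg _).trans (hlow y hyK x)
  have hsup : (⨆ x : Metric.sphere (0 : EuclideanSpace ℝ (Fin n)) 1,
      supportFunction K (x : EuclideanSpace ℝ (Fin n))) ≤ ‖y‖ := by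
    refine ciSup_le fun x => csSup_le (hne.image _) ?_
    rintro _ ⟨z, hz, rfl⟩
    refine (real_inner_le_norm z x).trans ?_
    simpa using hy hz
  have hsup0 : 0 ≤ (⨆ x : Metric.sphere (0 : EuclideanSpace ℝ (Fin n)) 1,
      supportFunction K (x : EuclideanSpace ℝ (Fin n))) := Real.iSup_nonneg fun x => hnn x
  have hyu : ∃ u : Metric.sphere (0 : EuclideanSpace ℝ (Fin n)) 1,
      y = ‖y‖ • (u : EuclideanSpace ℝ (Fin n)) := by
    by_cases h0 : y = 0
    · exact ⟨x0, by simp [h0]⟩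
    · have h1 : ‖y‖ ≠ 0 := norm_ne_zero_iff.2 h0
      refine ⟨⟨‖y‖⁻¹ • y, ?_⟩, ?_⟩
      · rw [mem_sphere_zero_iff_norm, norm_smul, norm_inv, norm_norm, inv_mul_cancel₀ h1]
      · simp [smul_smul, h1]
  obtain ⟨u, hu⟩ := hyu
  have hint : Continuous fun x : Metric.sphere (0 : EuclideanSpace ℝ (Fin n)) 1 =>
      supportFunction K (x : EuclideanSpace ℝ (Fin n)) ^ p * f x :=
    (Continuous.rpow_const ((continuous_supportFunction hK).comp continuous_subtype_val)
      fun _ => Or.inr hp.le).mul hf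
  calc g u0 * (⨆ x : Metric.sphere (0 : EuclideanSpace ℝ (Fin n)) 1,
              supportFunction K (x : EuclideanSpace ℝ (Fin n))) ^ p
      ≤ g u * ‖y‖ ^ p :=
        mul_le_mul (hu0 (Set.mem_univ u)) (Real.rpow_le_rpow hsup0 hsup hp.le)
          (Real.rpow_nonneg hsup0 _) (hgpos u).le
    _ = ∫ x : Metric.sphere (0 : EuclideanSpace ℝ (Fin n)) 1,
          |⟪y, (x : EuclideanSpace ℝ (Fin n))⟫| ^ p * f x
          ∂((volume : Measure (EuclideanSpace ℝ (Fin n))).toSphere) := by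
        rw [mul_comm, ← integral_const_mul]
        congr 1
        funext x
        conv_rhs => rw [hu]
        rw [inner_smul_left, abs_mul, Real.mul_rpow (abs_nonneg _) (abs_nonneg _)]
        simp [mul_assoc]
    _ ≤ _ := by
        refine integral_mono (integrable_aux (hcont y)) (integrable_aux hint) fun x => ?_
        exact mul_le_mul_of_nonneg_right
          (Real.rpow_le_rpow (abs_nonneg _) (hlow y hyK x) hp.le) (hf0 x)
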